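/- Let s > 0, D > 0 and let (H_n)_{n≥0} be a sequence of nonnegative real numbers satisfying, for all n ≥ 1, the recurrence H_{n+2} = ( n/((n+2)s) + D/(n+2) )·H_{n+1} + ( D/((n+2)(n+1)) )·H_n. Then for every real u with |u| < s, the series Σ_{n=0}^∞ H_n |u|ⁿ converges. -/

import Mathlib

/-!
The coefficients of the recurrence tend to `1 / s` and `0`. After the rescaling
`x n = ‖H n‖ * |u| ^ n` their norms tend to `|u| / ‖s‖ < 1` and `0`, so eventually
`x (n + 2) ≤ p * x (n + 1) + q * x n` with constants `p + q < 1`. Summing this inequality over `n`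
bounds a partial sum `S` of `x` by `C + (p + q) * S`, hence by `C / (1 - p - q)`.
-/

open Filter Finset Topology

theorem sum_range_shift_le_sum_range_add {M : Type*} [AddCommMonoid M] [PartialOrder M]
    [IsOrderedAddMonoid M] {x : ℕ → M} (hx : ∀ n, 0 ≤ x n) {i k : ℕ} (hik : i ≤ k) (N : ℕ) :
    ∑ n ∈ range N, x (n + i) ≤ ∑ n ∈ range (k + N), x n :=
  calc ∑ n ∈ range N, x (n + i)
      ≤ ∑ n ∈ range i, x n + ∑ n ∈ range N, x (i + n) := by
        simp only [add_comm _ i]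
        exact le_add_of_nonneg_left (sum_nonneg fun n _ => hx n)
    _ = ∑ n ∈ range (i + N), x n := (sum_range_add x i N).symm
    _ ≤ ∑ n ∈ range (k + N), x n :=
        sum_le_sum_of_subset_of_nonneg (range_mono (by lia)) fun n _ _ => hx n

theorem exists_forall_lt_sum_lt {ι : Type*} [Fintype ι] {γ : ι → ℝ} {b : ℝ}
    (hγ : ∑ i, γ i < b) : ∃ c : ι → ℝ, (∀ i, γ i < c i) ∧ ∑ i, c i < b := by
  have hlim : Tendsto (fun ε : ℝ => ∑ i, (γ i + ε)) (𝓝[>] 0) (𝓝 (∑ i, γ i)) := by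
    refine (Continuous.tendsto' (by fun_prop) 0 _ ?_).mono_left nhdsWithin_le_nhds
    simp only [add_zero]
  obtain ⟨ε, hε_sum, hε⟩ := ((hlim.eventually_lt_const hγ).and self_mem_nhdsWithin).exists
  exact ⟨fun i => γ i + ε, fun i => lt_add_of_pos_right _ hε, hε_sum⟩

section RatioTest

variable {k : ℕ} {x : ℕ → ℝ}

theorem summable_of_le_sum_mul {c : Fin k → ℝ} (hx : ∀ n, 0 ≤ x n) (hc : ∀ i, 0 ≤ c i)
    (hc_sum : ∑ i, c i < 1) (hrec : ∀ n, x (n + k) ≤ ∑ i, c i * x (n + i)) :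
    Summable x := by
  refine summable_of_sum_range_le (c := (∑ n ∈ range k, x n) / (1 - ∑ i, c i)) hx fun N => ?_
  set S := ∑ n ∈ range (k + N), x n
  have tail_le : ∑ n ∈ range N, x (n + k) ≤ (∑ i, c i) * S :=
    calc ∑ n ∈ range N, x (n + k)
        ≤ ∑ n ∈ range N, ∑ i, c i * x (n + i) := sum_le_sum fun n _ => hrec n
      _ = ∑ i, c i * ∑ n ∈ range N, x (n + i) := by rw [sum_comm]; simp only [mul_sum]
      _ ≤ ∑ i, c i * S := sum_le_sum fun i _ =>
          mul_le_mul_of_nonneg_left (sum_range_shift_le_sum_range_add hx i.is_lt.le N) (hc i)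
      _ = (∑ i, c i) * S := (sum_mul ..).symm
  have split : S = ∑ n ∈ range k, x n + ∑ n ∈ range N, x (n + k) := by
    simp only [S, sum_range_add, add_comm k]
  calc ∑ n ∈ range N, x n ≤ S := sum_range_shift_le_sum_range_add hx k.zero_le N
    _ ≤ (∑ n ∈ range k, x n) / (1 - ∑ i, c i) := by
        rw [le_div_iff₀ (sub_pos.2 hc_sum)]
        linarith

theorem summable_of_eventually_le_sum_mul_of_tendsto {c : ℕ → Fin k → ℝ} {γ : Fin k → ℝ}
    (hx : ∀ n, 0 ≤ x n) (hγ : ∀ i, 0 ≤ γ i) (hγ_sum : ∑ i, γ i < 1)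
    (hc : ∀ i, Tendsto (c · i) atTop (𝓝 (γ i)))
    (hrec : ∀ᶠ n in atTop, x (n + k) ≤ ∑ i, c n i * x (n + i)) :
    Summable x := by
  obtain ⟨d, hγd, hd_sum⟩ := exists_forall_lt_sum_lt hγ_sum
  have hcd : ∀ᶠ n in atTop, ∀ i, c n i ≤ d i :=
    eventually_all.2 fun i => (hc i).eventually_le_const (hγd i)
  obtain ⟨N, hN⟩ := eventually_atTop.1 (hrec.and hcd)
  refine (summable_nat_add_iff N).1 <| summable_of_le_sum_mul (fun n => hx (n + N))
    (fun i => (hγ i).trans (hγd i).le) hd_sum fun n => ?_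
  obtain ⟨hrec_n, hcd_n⟩ := hN (n + N) (by lia)
  simp only [add_right_comm n _ N]
  exact hrec_n.trans <| sum_le_sum fun i _ => mul_le_mul_of_nonneg_right (hcd_n i) (hx _)

end RatioTest

theorem summable_norm_mul_pow_of_linear_recurrence {𝕜 E : Type*} [SeminormedRing 𝕜]
    [SeminormedAddCommGroup E] [Module 𝕜 E] [IsBoundedSMul 𝕜 E] {k : ℕ} {f : ℕ → E}
    {a : ℕ → Fin k → 𝕜} {α : Fin k → 𝕜} (ha : ∀ i, Tendsto (a · i) atTop (𝓝 (α i)))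
    (hrec : ∀ᶠ n in atTop, f (n + k) = ∑ i, a n i • f (n + i))
    {r : ℝ} (hr : 0 ≤ r) (hαr : ∑ i, ‖α i‖ * r ^ (k - i : ℕ) < 1) :
    Summable fun n => ‖f n‖ * r ^ n := by
  refine summable_of_eventually_le_sum_mul_of_tendsto (fun n => by positivity)
    (fun i => by positivity) hαr (fun i => (ha i).norm.mul_const (r ^ (k - i : ℕ))) ?_
  filter_upwards [hrec] with n hn
  calc ‖f (n + k)‖ * r ^ (n + k)
      ≤ (∑ i, ‖a n i‖ * ‖f (n + i)‖) * r ^ (n + k) := by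
        rw [hn]
        gcongr
        exact norm_sum_le_of_le _ fun i _ => norm_smul_le _ _
    _ = ∑ i, ‖a n i‖ * r ^ (k - i : ℕ) * (‖f (n + i)‖ * r ^ (n + i : ℕ)) := by
        rw [sum_mul]
        refine sum_congr rfl fun i _ => ?_
        rw [show n + k = (k - i) + (n + i) by lia, pow_add]
        ring

theorem tendsto_const_div_natCast_add_atTop {𝕜 : Type*} [DivisionSemiring 𝕜] [CharZero 𝕜]
    [TopologicalSpace 𝕜] [ContinuousSMul ℚ≥0 𝕜] [IsTopologicalSemiring 𝕜] [ContinuousInv₀ 𝕜]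
    (D x : 𝕜) : Tendsto (fun n : ℕ => D / (n + x)) atTop (𝓝 0) := by
  have hprod := (tendsto_const_div_atTop_nhds_zero_nat D).mul (tendsto_natCast_div_add_atTop x)
  rw [zero_mul] at hprod
  refine hprod.congr' ?_
  filter_upwards [eventually_ne_atTop 0] with n hn
  exact div_mul_div_cancel₀ (Nat.cast_ne_zero.2 hn)

section Coefficients

variable {𝕜 : Type*} [Semifield 𝕜] [CharZero 𝕜] [TopologicalSpace 𝕜] [ContinuousSMul ℚ≥0 𝕜]
  [IsTopologicalSemiring 𝕜] [ContinuousInv₀ 𝕜]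

theorem tendsto_natCast_div_add_mul_add_const_div_atTop (s D x : 𝕜) :
    Tendsto (fun n : ℕ => n / ((n + x) * s) + D / (n + x)) atTop (𝓝 s⁻¹) := by
  simpa only [div_div, one_div, add_zero] using
    ((tendsto_natCast_div_add_atTop x).div_const s).add (tendsto_const_div_natCast_add_atTop D x)

theorem tendsto_const_div_natCast_add_mul_natCast_add_atTop (D x y : 𝕜) :
    Tendsto (fun n : ℕ => D / ((n + x) * (n + y))) atTop (𝓝 0) := by
  simpa only [div_mul_div_comm, mul_one, mul_zero] using
    (tendsto_const_div_natCast_add_atTop D x).mul (tendsto_const_div_natCast_add_atTop 1 y)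

end Coefficients

theorem majorizing_sequence_power_series_converges_general {𝕜 E : Type*} [NormedField 𝕜]
    [CharZero 𝕜] [ContinuousSMul ℚ≥0 𝕜] [SeminormedAddCommGroup E] [NormedSpace 𝕜 E]
    (s D : 𝕜) (H : ℕ → E)
    (hHrec : ∀ n : ℕ, 1 ≤ n →
      H (n + 2) = ((n : 𝕜) / (((n : 𝕜) + 2) * s) + D / ((n : 𝕜) + 2)) • H (n + 1)
        + (D / (((n : 𝕜) + 2) * ((n : 𝕜) + 1))) • H n)
    (u : ℝ) (hu : |u| < ‖s‖) :
    Summable fun n => ‖H n‖ * |u| ^ n := by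
  refine summable_norm_mul_pow_of_linear_recurrence (k := 2) (α := ![0, s⁻¹])
    (a := fun n => ![D / (((n : 𝕜) + 2) * ((n : 𝕜) + 1)),
      (n : 𝕜) / (((n : 𝕜) + 2) * s) + D / ((n : 𝕜) + 2)])
    (Fin.forall_fin_two.2 ⟨tendsto_const_div_natCast_add_mul_natCast_add_atTop D 2 1,
      tendsto_natCast_div_add_mul_add_const_div_atTop s D 2⟩)
    ?_ (abs_nonneg u) ?_
  · filter_upwards [eventually_ge_atTop 1] with n hn
    simpa [Fin.sum_univ_two, add_comm] using hHrec n hn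
  · have hratio : ‖s‖⁻¹ * |u| < 1 := by
      rwa [inv_mul_lt_one₀ ((abs_nonneg u).trans_lt hu)]
    simpa [Fin.sum_univ_two] using hratio

/-- Any nonnegative sequence satisfying the second order recurrence gives a power series
with radius of convergence at least `s`. -/
theorem majorizing_sequence_power_series_converges
    (s D : ℝ) (hs : 0 < s) (hD : 0 < D)
    (H : ℕ → ℝ) (hHnonneg : ∀ n : ℕ, 0 ≤ H n)
    (hHrec : ∀ n : ℕ, 1 ≤ n →
      H (n + 2) = ((n : ℝ) / (((n : ℝ) + 2) * s) + D / ((n : ℝ) + 2)) * H (n + 1)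
        + D / (((n : ℝ) + 2) * ((n : ℝ) + 1)) * H n) :
    ∀ u : ℝ, |u| < s → Summable (fun n : ℕ => H n * |u| ^ n) := by
  intro u hu
  simpa only [Real.norm_eq_abs, abs_of_nonneg (hHnonneg _)] using
    majorizing_sequence_power_series_converges_general s D H hHrec u (hu.trans_le (le_abs_self s))
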